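/- Let K > 0, A > 0, and ε ∈ (0,1). Let Ψ : ℝ² × [0,∞) × (−π/2,π/2) × (−π,π) → ℝ be continuously differentiable in (ι₁,ι₂,ψ) with |Ψ| ≤ e^{−Kη}, |∂_{ι₁}Ψ| ≤ e^{−Kη}, |∂_{ι₂}Ψ| ≤ e^{−Kη} and |∂_ψΨ| ≤ e^{−Kη} everywhere. Let b₁, b₂, c be measurable coefficient functions of (η,φ,ψ) with |b₁|, |b₂|, |c| ≤ A. Fix ι = (ι₁,ι₂) and define S₂(η,φ,ψ) := ε⁻¹ sinφ · χ̃(ε⁻¹φ) · (d/dη)[χ(εη)] · Ψ(ι,η,φ,ψ) + b₁ cosφ · χ̃(ε⁻¹φ) χ(εη) ∂_{ι₁}Ψ + b₂ cosφ · χ̃(ε⁻¹φ) χ(εη) ∂_{ι₂}Ψ + c · χ̃(ε⁻¹φ) χ(εη) ∂_ψΨ. Then both ( ε ∫₀^∞ ∫_{−π/2}^{π/2} ∫_{−π}^{π} (1+η)² |S₂|² cosφ dψ dφ dη )^{1/2} ≤ C ε^{1/2} and ( ε ∫₀^∞ (1+η)² ( ∫_{−π/2}^{π/2} ∫_{−π}^{π}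 |S₂| cosφ dψ dφ )² dη )^{1/2} ≤ C ε^{1/2}, where C depends only on K and A (not on ε, ι, or Ψ). -/

import Mathlib

open MeasureTheory Real Set

noncomputable section

/-- A smooth cut-off function: `0 ≤ χ ≤ 1`, `χ = 1` on `{|y| ≤ 1}`, `χ = 0` on `{|y| ≥ 2}`. -/
def IsCutoff (χ : ℝ → ℝ) : Prop :=
  ContDiff ℝ (⊤ : ℕ∞) χ ∧ (∀ y, χ y ∈ Icc (0:ℝ) 1) ∧ (∀ y, |y| ≤ 1 → χ y = 1) ∧
    (∀ y, 2 ≤ |y| → χ y = 0)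

/-- The cut-off boundary layer `U = χ̃(ε⁻¹φ) χ(εη) Ψ(η,φ,ψ)`, where `χ̃ = 1 - χ`. -/
def cutU (χ : ℝ → ℝ) (ε : ℝ) (Ψ : ℝ → ℝ → ℝ → ℝ) (η φ ψ : ℝ) : ℝ :=
  (1 - χ (ε⁻¹ * φ)) * χ (ε * η) * Ψ η φ ψ

/-!
By the chain rule `d/dη [χ(εη)]` carries a factor `ε`, which cancels the singular `ε⁻¹`. Hence `S₂`
is bounded pointwise by `(L + 3A) e^{-Kη}`, where `L` is a Lipschitz constant of `χ`. The angular
domain has finite measure and the exponential absorbs the weight `(1 + η)²`, so both `η`-integrals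
are bounded uniformly in `ε`, and the prefactor `ε` alone produces the rate `ε^{1/2}`.
-/

lemma IsCutoff.hasCompactSupport {χ : ℝ → ℝ} (hχ : IsCutoff χ) : HasCompactSupport χ := by
  refine HasCompactSupport.intro (isCompact_Icc (a := -2) (b := 2)) fun y hy => hχ.2.2.2 y ?_
  by_contra h
  exact hy (abs_le.mp (not_le.mp h).le)

lemma IsCutoff.exists_lipschitzWith {χ : ℝ → ℝ} (hχ : IsCutoff χ) : ∃ L, LipschitzWith L χ :=
  hχ.1.lipschitzWith_of_hasCompactSupport hχ.hasCompactSupport (by simp)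

/-- The source term `S₂` at fixed tangential parameters `(ι₁, ι₂)`: the boundary-layer terms in
which a derivative falls on the normal cut-off `χ(εη)` or on the `ι₁`, `ι₂`, `ψ` variables of `Ψ`.
The `φ` cut-off `χ̃` is written as `1 - χ`. -/
def tangentialSource (χ : ℝ → ℝ) (ε : ℝ) (Ψ : ℝ → ℝ → ℝ → ℝ → ℝ → ℝ) (b₁ b₂ c : ℝ → ℝ → ℝ → ℝ)
    (ι₁ ι₂ η φ ψ : ℝ) : ℝ :=
  ε⁻¹ * sin φ * (1 - χ (ε⁻¹ * φ)) * deriv (fun t => χ (ε * t)) η * Ψ ι₁ ι₂ η φ ψ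
    + b₁ η φ ψ * cos φ * (1 - χ (ε⁻¹ * φ)) * χ (ε * η) * deriv (fun t => Ψ t ι₂ η φ ψ) ι₁
    + b₂ η φ ψ * cos φ * (1 - χ (ε⁻¹ * φ)) * χ (ε * η) * deriv (fun t => Ψ ι₁ t η φ ψ) ι₂
    + c η φ ψ * (1 - χ (ε⁻¹ * φ)) * χ (ε * η) * deriv (fun t => Ψ ι₁ ι₂ η φ t) ψ

section PointwiseBound

variable {χ : ℝ → ℝ} {L : NNReal} {ε : ℝ}

lemma abs_inv_mul_deriv_comp_mul_left_le (hL : LipschitzWith L χ) (hε : ε ≠ 0) (η : ℝ) :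
    |ε⁻¹ * deriv (fun t => χ (ε * t)) η| ≤ L := by
  rw [deriv_comp_mul_left, smul_eq_mul, inv_mul_cancel_left₀ hε]
  exact norm_deriv_le_of_lipschitz hL

lemma abs_tangentialSource_le {Ψ : ℝ → ℝ → ℝ → ℝ → ℝ → ℝ} {b₁ b₂ c : ℝ → ℝ → ℝ → ℝ}
    {ι₁ ι₂ η φ ψ A E : ℝ} (hχ : ∀ y, χ y ∈ Icc (0 : ℝ) 1) (hL : LipschitzWith L χ) (hε : ε ≠ 0)
    (hΨ : |Ψ ι₁ ι₂ η φ ψ| ≤ E) (hΨ₁ : |deriv (fun t => Ψ t ι₂ η φ ψ) ι₁| ≤ E)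
    (hΨ₂ : |deriv (fun t => Ψ ι₁ t η φ ψ) ι₂| ≤ E)
    (hΨψ : |deriv (fun t => Ψ ι₁ ι₂ η φ t) ψ| ≤ E)
    (hb₁ : |b₁ η φ ψ| ≤ A) (hb₂ : |b₂ η φ ψ| ≤ A) (hc : |c η φ ψ| ≤ A) :
    |tangentialSource χ ε Ψ b₁ b₂ c ι₁ ι₂ η φ ψ| ≤ (L + 3 * A) * E := by
  have hA : 0 ≤ A := (abs_nonneg _).trans hc
  have hcutφ : |1 - χ (ε⁻¹ * φ)| ≤ 1 :=
    abs_le.mpr ⟨by linarith [(hχ (ε⁻¹ * φ)).2], by linarith [(hχ (ε⁻¹ * φ)).1]⟩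
  have hcutη : |χ (ε * η)| ≤ 1 := abs_le.mpr ⟨by linarith [(hχ (ε * η)).1], (hχ (ε * η)).2⟩
  have hcos := abs_cos_le_one φ
  have normal_term : |ε⁻¹ * sin φ * (1 - χ (ε⁻¹ * φ)) * deriv (fun t => χ (ε * t)) η
      * Ψ ι₁ ι₂ η φ ψ| ≤ L * E :=
    calc _ = |ε⁻¹ * deriv (fun t => χ (ε * t)) η| * |sin φ| * |1 - χ (ε⁻¹ * φ)|
            * |Ψ ι₁ ι₂ η φ ψ| := by simp only [abs_mul]; ring
      _ ≤ L * 1 * 1 * E := by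
          gcongr
          exacts [abs_inv_mul_deriv_comp_mul_left_le hL hε η, abs_sin_le_one φ]
      _ = L * E := by ring
  have tangential_term {b d : ℝ} (hb : |b| ≤ A) (hd : |d| ≤ E) :
      |b * cos φ * (1 - χ (ε⁻¹ * φ)) * χ (ε * η) * d| ≤ A * E :=
    calc _ ≤ A * 1 * 1 * 1 * E := by simp only [abs_mul]; gcongr
      _ = A * E := by ring
  have angular_term : |c η φ ψ * (1 - χ (ε⁻¹ * φ)) * χ (ε * η)
      * deriv (fun t => Ψ ι₁ ι₂ η φ t) ψ| ≤ A * E :=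
    calc _ ≤ A * 1 * 1 * E := by simp only [abs_mul]; gcongr
      _ = A * E := by ring
  rw [tangentialSource]
  calc _ ≤ L * E + A * E + A * E + A * E :=
        (abs_add_le _ _).trans <| add_le_add ((abs_add_le _ _).trans <| add_le_add
          ((abs_add_le _ _).trans <| add_le_add normal_term (tangential_term hb₁ hΨ₁))
          (tangential_term hb₂ hΨ₂)) angular_term
    _ = (L + 3 * A) * E := by ring

end PointwiseBound

section ExponentialDecay

variable {K η : ℝ}

lemma one_add_le_mul_exp (hK : 0 < K) (hη : 0 ≤ η) : 1 + η ≤ (1 + 2 / K) * exp (K * η / 2) :=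
  calc 1 + η ≤ 1 + η + (K * η / 2 + 2 / K) := le_add_of_nonneg_right (by positivity)
    _ = (1 + 2 / K) * (K * η / 2 + 1) := by field_simp; ring
    _ ≤ (1 + 2 / K) * exp (K * η / 2) := by gcongr; exact add_one_le_exp _

lemma sq_one_add_mul_exp_neg_le (hK : 0 < K) (hη : 0 ≤ η) :
    ((1 + η) * exp (-K * η)) ^ 2 ≤ (1 + 2 / K) ^ 2 * exp (-K * η) :=
  calc ((1 + η) * exp (-K * η)) ^ 2
      ≤ ((1 + 2 / K) * exp (K * η / 2) * exp (-K * η)) ^ 2 := by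
        gcongr; exact one_add_le_mul_exp hK hη
    _ = (1 + 2 / K) ^ 2 * exp (-K * η) := by
        rw [mul_assoc, ← exp_add, mul_pow, ← exp_nat_mul]; congr 2; push_cast; ring

lemma norm_integral_Ioi_le_of_norm_le_sq_decay {E : Type*} [NormedAddCommGroup E] [NormedSpace ℝ E]
    {F : ℝ → E} {P : ℝ} (hK : 0 < K) (hP : 0 ≤ P)
    (hF : ∀ η > 0, ‖F η‖ ≤ P * ((1 + η) * exp (-K * η)) ^ 2) :
    ‖∫ η in Ioi (0 : ℝ), F η‖ ≤ P * ((1 + 2 / K) ^ 2 / K) := by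
  have hdom : ∀ η ∈ Ioi (0 : ℝ), ‖F η‖ ≤ P * ((1 + 2 / K) ^ 2 * exp (-K * η)) := fun η hη =>
    (hF η hη).trans <| by gcongr; exact sq_one_add_mul_exp_neg_le hK hη.le
  calc ‖∫ η in Ioi (0 : ℝ), F η‖
      ≤ ∫ η in Ioi (0 : ℝ), P * ((1 + 2 / K) ^ 2 * exp (-K * η)) :=
        norm_integral_le_of_norm_le (((exp_neg_integrableOn_Ioi 0 hK).const_mul _).const_mul _)
          (ae_restrict_of_forall_mem measurableSet_Ioi hdom)
    _ = P * ((1 + 2 / K) ^ 2 / K) := by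
        rw [integral_const_mul, integral_const_mul, integral_exp_mul_Ioi (neg_lt_zero.mpr hK)]
        simp [div_eq_mul_inv]

end ExponentialDecay

section WeightedNorms

variable {X Y : Type*} [MeasurableSpace X] [MeasurableSpace Y] {μ : Measure X} {ν : Measure Y}
  {s : Set X} {t : Set Y}

lemma norm_setIntegral_setIntegral_le_of_norm_le_const {E : Type*} [NormedAddCommGroup E]
    [NormedSpace ℝ E] {f : X → Y → E} {B : ℝ} (hs : μ s < ⊤) (ht : ν t < ⊤)
    (hf : ∀ x ∈ s, ∀ y ∈ t, ‖f x y‖ ≤ B) :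
    ‖∫ x in s, ∫ y in t, f x y ∂ν ∂μ‖ ≤ B * (μ.real s * ν.real t) :=
  calc _ ≤ B * ν.real t * μ.real s :=
        norm_setIntegral_le_of_norm_le_const hs fun x hx =>
          norm_setIntegral_le_of_norm_le_const ht (hf x hx)
    _ = B * (μ.real s * ν.real t) := by ring

variable {S : ℝ → X → Y → ℝ} {ω : X → ℝ} {K D : ℝ}

lemma integral_sq_mul_sq_mul_le (hs : μ s < ⊤) (ht : ν t < ⊤) (hK : 0 < K)
    (hω : ∀ x ∈ s, |ω x| ≤ 1)
    (hS : ∀ η > 0, ∀ x ∈ s, ∀ y ∈ t, |S η x y| ≤ D * exp (-K * η)) :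
    ∫ η in Ioi (0 : ℝ), ∫ x in s, ∫ y in t, (1 + η) ^ 2 * S η x y ^ 2 * ω x ∂ν ∂μ
      ≤ D ^ 2 * (μ.real s * ν.real t) * ((1 + 2 / K) ^ 2 / K) := by
  refine (le_norm_self _).trans <|
    norm_integral_Ioi_le_of_norm_le_sq_decay hK (by positivity) fun η hη => ?_
  have hintegrand : ∀ x ∈ s, ∀ y ∈ t,
      ‖(1 + η) ^ 2 * S η x y ^ 2 * ω x‖ ≤ (1 + η) ^ 2 * (D * exp (-K * η)) ^ 2 * 1 := by
    intro x hx y hy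
    rw [norm_mul, norm_mul, norm_pow, norm_pow, norm_of_nonneg (by positivity : 0 ≤ 1 + η)]
    gcongr
    exacts [hS η hη x hx y hy, hω x hx]
  exact (norm_setIntegral_setIntegral_le_of_norm_le_const hs ht hintegrand).trans_eq (by ring)

lemma integral_sq_mul_integral_abs_mul_sq_le (hs : μ s < ⊤) (ht : ν t < ⊤) (hK : 0 < K)
    (hω : ∀ x ∈ s, |ω x| ≤ 1)
    (hS : ∀ η > 0, ∀ x ∈ s, ∀ y ∈ t, |S η x y| ≤ D * exp (-K * η)) :
    ∫ η in Ioi (0 : ℝ), (1 + η) ^ 2 * (∫ x in s, ∫ y in t, |S η x y| * ω x ∂ν ∂μ) ^ 2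
      ≤ (D * (μ.real s * ν.real t)) ^ 2 * ((1 + 2 / K) ^ 2 / K) := by
  refine (le_norm_self _).trans <|
    norm_integral_Ioi_le_of_norm_le_sq_decay hK (by positivity) fun η hη => ?_
  have hintegrand : ∀ x ∈ s, ∀ y ∈ t, ‖|S η x y| * ω x‖ ≤ D * exp (-K * η) := by
    intro x hx y hy
    rw [norm_mul, norm_eq_abs, abs_abs]
    exact (mul_le_of_le_one_right (abs_nonneg _) (hω x hx)).trans (hS η hη x hx y hy)
  calc ‖(1 + η) ^ 2 * (∫ x in s, ∫ y in t, |S η x y| * ω x ∂ν ∂μ) ^ 2‖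
      = (1 + η) ^ 2 * ‖∫ x in s, ∫ y in t, |S η x y| * ω x ∂ν ∂μ‖ ^ 2 := by
        rw [norm_mul, norm_pow, norm_pow, norm_of_nonneg (by positivity : 0 ≤ 1 + η)]
    _ ≤ (1 + η) ^ 2 * (D * exp (-K * η) * (μ.real s * ν.real t)) ^ 2 := by
        gcongr
        exact norm_setIntegral_setIntegral_le_of_norm_le_const hs ht hintegrand
    _ = (D * (μ.real s * ν.real t)) ^ 2 * ((1 + η) * exp (-K * η)) ^ 2 := by ring

end WeightedNorms

lemma volume_real_Ioo_pi_div_two_mul_volume_real_Ioo_pi :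
    volume.real (Ioo (-(π / 2)) (π / 2)) * volume.real (Ioo (-π) π) = 2 * π ^ 2 := by
  rw [volume_real_Ioo_of_le (by linarith [pi_pos]), volume_real_Ioo_of_le (by linarith [pi_pos])]
  ring

lemma sqrt_mul_le_mul_sqrt_of_le_sq {ε I C : ℝ} (hε : 0 ≤ ε) (hC : 0 ≤ C) (hI : I ≤ C ^ 2) :
    √(ε * I) ≤ C * √ε :=
  calc √(ε * I) ≤ √(C ^ 2 * ε) := sqrt_le_sqrt (by rw [mul_comm]; gcongr)
    _ = C * √ε := by rw [sqrt_mul (sq_nonneg C), sqrt_sq hC]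

lemma sqrt_weighted_norms_le {S : ℝ → ℝ → ℝ → ℝ} {K D ε : ℝ} (hK : 0 < K) (hD : 0 ≤ D)
    (hε : 0 ≤ ε)
    (hS : ∀ η > 0, ∀ φ ∈ Ioo (-(π / 2)) (π / 2), ∀ ψ ∈ Ioo (-π) π,
      |S η φ ψ| ≤ D * exp (-K * η)) :
    √(ε * ∫ η in Ioi (0 : ℝ), ∫ φ in Ioo (-(π / 2)) (π / 2), ∫ ψ in Ioo (-π) π,
        (1 + η) ^ 2 * S η φ ψ ^ 2 * cos φ) ≤ D * (2 * π ^ 2) * ((1 + 2 / K) / √K) * √ε ∧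
    √(ε * ∫ η in Ioi (0 : ℝ), (1 + η) ^ 2 * (∫ φ in Ioo (-(π / 2)) (π / 2), ∫ ψ in Ioo (-π) π,
        |S η φ ψ| * cos φ) ^ 2) ≤ D * (2 * π ^ 2) * ((1 + 2 / K) / √K) * √ε := by
  have hsq : (D * (2 * π ^ 2) * ((1 + 2 / K) / √K)) ^ 2
      = (D * (2 * π ^ 2)) ^ 2 * ((1 + 2 / K) ^ 2 / K) := by
    rw [mul_pow, div_pow (1 + 2 / K), sq_sqrt hK.le]
  have hmass : 1 ≤ 2 * π ^ 2 := by nlinarith [pi_gt_three]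
  constructor <;> refine sqrt_mul_le_mul_sqrt_of_le_sq hε (by positivity) ?_ <;> rw [hsq]
  · refine (integral_sq_mul_sq_mul_le measure_Ioo_lt_top measure_Ioo_lt_top hK
      (fun φ _ => abs_cos_le_one φ) hS).trans ?_
    rw [volume_real_Ioo_pi_div_two_mul_volume_real_Ioo_pi, mul_pow]
    gcongr
    exact le_self_pow₀ hmass two_ne_zero
  · rw [← volume_real_Ioo_pi_div_two_mul_volume_real_Ioo_pi]
    exact integral_sq_mul_integral_abs_mul_sq_le measure_Ioo_lt_top measure_Ioo_lt_top hK
      (fun φ _ => abs_cos_le_one φ) hS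

theorem s2_bounds_general (L : NNReal) (K A : ℝ) (hK : 0 < K) (hA : 0 < A) :
    ∃ C > (0 : ℝ), ∀ χ : ℝ → ℝ, (∀ y, χ y ∈ Icc (0 : ℝ) 1) → LipschitzWith L χ → ∀ ε > (0 : ℝ),
      ∀ Ψ : ℝ → ℝ → ℝ → ℝ → ℝ → ℝ, ∀ b₁ b₂ c : ℝ → ℝ → ℝ → ℝ, ∀ ι₁ ι₂ : ℝ,
      (∀ η ≥ (0 : ℝ), ∀ φ ∈ Ioo (-(π / 2)) (π / 2), ∀ ψ ∈ Ioo (-π) π,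
        DifferentiableAt ℝ (fun t => Ψ t ι₂ η φ ψ) ι₁ ∧
        DifferentiableAt ℝ (fun t => Ψ ι₁ t η φ ψ) ι₂ ∧
        DifferentiableAt ℝ (fun t => Ψ ι₁ ι₂ η φ t) ψ) →
      (∀ η ≥ (0 : ℝ), ∀ φ ∈ Ioo (-(π / 2)) (π / 2), ∀ ψ ∈ Ioo (-π) π,
        |Ψ ι₁ ι₂ η φ ψ| ≤ exp (-K * η) ∧
        |deriv (fun t => Ψ t ι₂ η φ ψ) ι₁| ≤ exp (-K * η) ∧
        |deriv (fun t => Ψ ι₁ t η φ ψ) ι₂| ≤ exp (-K * η) ∧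
        |deriv (fun t => Ψ ι₁ ι₂ η φ t) ψ| ≤ exp (-K * η)) →
      Measurable (fun p : ℝ × ℝ × ℝ => b₁ p.1 p.2.1 p.2.2) →
      Measurable (fun p : ℝ × ℝ × ℝ => b₂ p.1 p.2.1 p.2.2) →
      Measurable (fun p : ℝ × ℝ × ℝ => c p.1 p.2.1 p.2.2) →
      (∀ η φ ψ : ℝ, |b₁ η φ ψ| ≤ A ∧ |b₂ η φ ψ| ≤ A ∧ |c η φ ψ| ≤ A) →
      √(ε * ∫ η in Ioi (0 : ℝ), ∫ φ in Ioo (-(π / 2)) (π / 2), ∫ ψ in Ioo (-π) π,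
          (1 + η) ^ 2 * tangentialSource χ ε Ψ b₁ b₂ c ι₁ ι₂ η φ ψ ^ 2 * cos φ) ≤ C * √ε ∧
      √(ε * ∫ η in Ioi (0 : ℝ), (1 + η) ^ 2 * (∫ φ in Ioo (-(π / 2)) (π / 2), ∫ ψ in Ioo (-π) π,
          |tangentialSource χ ε Ψ b₁ b₂ c ι₁ ι₂ η φ ψ| * cos φ) ^ 2) ≤ C * √ε := by
  refine ⟨(L + 3 * A) * (2 * π ^ 2) * ((1 + 2 / K) / √K), by positivity, ?_⟩
  intro χ hχ hL ε hε Ψ b₁ b₂ c ι₁ ι₂ _ hΨ _ _ _ hb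
  refine sqrt_weighted_norms_le hK (by positivity) hε.le fun η hη φ hφ ψ hψ => ?_
  obtain ⟨hΨ₀, hΨ₁, hΨ₂, hΨψ⟩ := hΨ η hη.le φ hφ ψ hψ
  obtain ⟨hb₁, hb₂, hc⟩ := hb η φ ψ
  exact abs_tangentialSource_le hχ hL hε.ne' hΨ₀ hΨ₁ hΨ₂ hΨψ hb₁ hb₂ hc

/-- Weighted `L²` and `L²_ηL¹_w` bounds of order `ε^{1/2}` for the
tangential source term `S₂`. -/
theorem s2_bounds (χ : ℝ → ℝ) (hχ : IsCutoff χ) (K A : ℝ) (hK : 0 < K) (hA : 0 < A) :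
    ∃ C > (0:ℝ), ∀ ε ∈ Ioo (0:ℝ) 1,
      ∀ Ψ : ℝ → ℝ → ℝ → ℝ → ℝ → ℝ, ∀ b₁ b₂ c : ℝ → ℝ → ℝ → ℝ, ∀ ι₁ ι₂ : ℝ,
      (∀ s₁ s₂ : ℝ, ∀ η ≥ (0:ℝ), ∀ φ ∈ Ioo (-(π/2)) (π/2), ∀ ψ ∈ Ioo (-π) π,
        DifferentiableAt ℝ (fun t => Ψ t s₂ η φ ψ) s₁ ∧
        DifferentiableAt ℝ (fun t => Ψ s₁ t η φ ψ) s₂ ∧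
        DifferentiableAt ℝ (fun t => Ψ s₁ s₂ η φ t) ψ) →
      (∀ s₁ s₂ : ℝ, ∀ η ≥ (0:ℝ), ∀ φ ∈ Ioo (-(π/2)) (π/2), ∀ ψ ∈ Ioo (-π) π,
        |Ψ s₁ s₂ η φ ψ| ≤ Real.exp (-K * η) ∧
        |deriv (fun t => Ψ t s₂ η φ ψ) s₁| ≤ Real.exp (-K * η) ∧
        |deriv (fun t => Ψ s₁ t η φ ψ) s₂| ≤ Real.exp (-K * η) ∧
        |deriv (fun t => Ψ s₁ s₂ η φ t) ψ| ≤ Real.exp (-K * η)) →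
      Measurable (fun p : ℝ × ℝ × ℝ => b₁ p.1 p.2.1 p.2.2) →
      Measurable (fun p : ℝ × ℝ × ℝ => b₂ p.1 p.2.1 p.2.2) →
      Measurable (fun p : ℝ × ℝ × ℝ => c p.1 p.2.1 p.2.2) →
      (∀ η φ ψ : ℝ, |b₁ η φ ψ| ≤ A ∧ |b₂ η φ ψ| ≤ A ∧ |c η φ ψ| ≤ A) →
      ∀ S₂ : ℝ → ℝ → ℝ → ℝ,
      (∀ η φ ψ : ℝ, S₂ η φ ψ =
        ε⁻¹ * Real.sin φ * (1 - χ (ε⁻¹ * φ)) * deriv (fun t => χ (ε * t)) η * Ψ ι₁ ι₂ η φ ψ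
        + b₁ η φ ψ * Real.cos φ * (1 - χ (ε⁻¹ * φ)) * χ (ε * η) *
            deriv (fun t => Ψ t ι₂ η φ ψ) ι₁
        + b₂ η φ ψ * Real.cos φ * (1 - χ (ε⁻¹ * φ)) * χ (ε * η) *
            deriv (fun t => Ψ ι₁ t η φ ψ) ι₂
        + c η φ ψ * (1 - χ (ε⁻¹ * φ)) * χ (ε * η) * deriv (fun t => Ψ ι₁ ι₂ η φ t) ψ) →
      Real.sqrt (ε * ∫ η in Ioi (0:ℝ), ∫ φ in Ioo (-(π/2)) (π/2), ∫ ψ in Ioo (-π) π,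
          (1+η)^2 * (S₂ η φ ψ)^2 * Real.cos φ) ≤ C * Real.sqrt ε ∧
      Real.sqrt (ε * ∫ η in Ioi (0:ℝ), (1+η)^2 * (∫ φ in Ioo (-(π/2)) (π/2),
          ∫ ψ in Ioo (-π) π, |S₂ η φ ψ| * Real.cos φ)^2) ≤ C * Real.sqrt ε := by
  obtain ⟨L, hL⟩ := hχ.exists_lipschitzWith
  obtain ⟨C, hC, hbound⟩ := s2_bounds_general L K A hK hA
  refine ⟨C, hC, fun ε hε Ψ b₁ b₂ c ι₁ ι₂ hdiff hΨ hb₁ hb₂ hc hb S₂ hS => ?_⟩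
  simp only [hS]
  exact hbound χ hχ.2.1 hL ε hε.1 Ψ b₁ b₂ c ι₁ ι₂ (hdiff ι₁ ι₂) (hΨ ι₁ ι₂) hb₁ hb₂ hc hb
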